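/- Let d ≥ 1 and let F ⊆ ℤ^d be a finite set, and define F̄ = (0,1]^d + F ⊆ ℝ^d. Then F̄ tiles ℝ^d by translations — i.e., there exists C ⊆ ℝ^d such that the translates F̄ + c, for c ∈ C, are pairwise disjoint and their union is ℝ^d — if and only if F tiles ℤ^d, i.e., there exists C₀ ⊆ ℤ^d with F ⊕ C₀ = ℤ^d. -/

import Mathlib

/-- `F ⊕ C = E` in `ℤ^d` : every sum `f + c` lies in `E`, and every element of `E`
can be uniquely expressed as `f + c` with `f ∈ F` and `c ∈ C`. -/
def TileOplus {d : ℕ} (F C E : Set (Fin d → ℤ)) : Prop :=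
  (∀ f ∈ F, ∀ c ∈ C, f + c ∈ E) ∧
    ∀ e ∈ E, ∃! p : (Fin d → ℤ) × (Fin d → ℤ), p.1 ∈ F ∧ p.2 ∈ C ∧ p.1 + p.2 = e

/-- The set `F̄ = (0,1]^d + F ⊆ ℝ^d` associated to a set `F ⊆ ℤ^d`. -/
def cubeSet {d : ℕ} (F : Set (Fin d → ℤ)) : Set (Fin d → ℝ) :=
  {x | ∃ (t : Fin d → ℝ) (f : Fin d → ℤ),
    (∀ i, t i ∈ Set.Ioc (0 : ℝ) 1) ∧ f ∈ F ∧ x = t + fun i => (f i : ℝ)}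

theorem mem_translate_cubeSet {d : ℕ} (F : Set (Fin d → ℤ)) (c x : Fin d → ℝ) :
    x ∈ (fun y => c + y) '' cubeSet F ↔ (fun i => ⌈x i - c i⌉ - 1) ∈ F := by
  constructor
  · rintro ⟨y, ⟨t, f, ht, hf, rfl⟩, rfl⟩
    convert hf using 1
    funext i
    have h : ⌈(c + (t + fun i => (f i : ℝ))) i - c i⌉ = f i + 1 := by
      rw [Int.ceil_eq_iff]
      have := ht i
      simp only [Pi.add_apply, Set.mem_Ioc] at this ⊢
      push_cast
      constructor <;> linarith
    rw [h]
    ring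
  · intro h
    refine ⟨x - c, ⟨fun i => x i - c i - ((⌈x i - c i⌉ - 1 : ℤ) : ℝ), _, ?_, h, ?_⟩, ?_⟩
    · intro i
      have h1 := Int.le_ceil (x i - c i)
      have h2 := Int.ceil_lt_add_one (x i - c i)
      push_cast
      constructor <;> linarith
    · funext i
      simp
    · simp

/-- For a finite set `F ⊆ ℤ^d` (`d ≥ 1`), the set `F̄ = (0,1]^d + F` tiles `ℝ^d` by
translations if and only if `F` tiles `ℤ^d`. -/
theorem cubeSet_tiles_real_iff_tiles_int (d : ℕ) (hd : 1 ≤ d)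
    (F : Set (Fin d → ℤ)) (hF : F.Finite) :
    (∃ C : Set (Fin d → ℝ),
        (∀ c₁ ∈ C, ∀ c₂ ∈ C, c₁ ≠ c₂ →
          Disjoint ((fun x => c₁ + x) '' cubeSet F) ((fun x => c₂ + x) '' cubeSet F)) ∧
        (⋃ c ∈ C, (fun x => c + x) '' cubeSet F) = Set.univ) ↔
      ∃ C₀ : Set (Fin d → ℤ), TileOplus F C₀ Set.univ := by
  constructor
  · rintro ⟨C, hdis, hcov⟩
    have key : ∀ (c : Fin d → ℝ) (n : Fin d → ℤ),
        ((fun i => (n i : ℝ)) ∈ (fun y => c + y) '' cubeSet F ↔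
          (n - fun i => ⌊c i⌋ + 1) ∈ F) := by
      intro c n
      rw [mem_translate_cubeSet]
      have : (fun i => ⌈(n i : ℝ) - c i⌉ - 1) = (n - fun i => ⌊c i⌋ + 1) := by
        funext i
        have h : ⌈(n i : ℝ) - c i⌉ = n i - ⌊c i⌋ := by
          rw [sub_eq_add_neg, Int.ceil_intCast_add, Int.ceil_neg]
          ring
        simp only [Pi.sub_apply, h]
        ring
      rw [this]
    refine ⟨(fun (c : Fin d → ℝ) (i : Fin d) => ⌊c i⌋ + 1) '' C, fun _ _ _ _ => trivial, ?_⟩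
    intro n _
    have hn : (fun i => (n i : ℝ)) ∈ ⋃ c ∈ C, (fun x => c + x) '' cubeSet F := by
      rw [hcov]; trivial
    simp only [Set.mem_iUnion, exists_prop] at hn
    obtain ⟨c, hc, hnc⟩ := hn
    refine ⟨(n - fun i => ⌊c i⌋ + 1, fun i => ⌊c i⌋ + 1),
      ⟨(key c n).1 hnc, ⟨c, hc, rfl⟩, sub_add_cancel _ _⟩, ?_⟩
    rintro ⟨f, _⟩ ⟨hf, ⟨c', hc', rfl⟩, h⟩
    simp only at hf h
    have hf' : f = n - fun i => ⌊c' i⌋ + 1 := eq_sub_of_add_eq h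
    have hnc' := (key c' n).2 (hf' ▸ hf)
    have hcc : c' = c := by
      by_contra hne
      exact Set.disjoint_left.1 (hdis c' hc' c hc hne) hnc' hnc
    subst hcc
    rw [hf']
  · rintro ⟨C₀, -, hC⟩
    have key : ∀ (c : Fin d → ℤ) (x : Fin d → ℝ),
        (x ∈ (fun y => (fun i => (c i : ℝ)) + y) '' cubeSet F ↔
          ((fun i => ⌈x i⌉ - 1) - c) ∈ F) := by
      intro c x
      rw [mem_translate_cubeSet]
      have : (fun i => ⌈x i - (c i : ℝ)⌉ - 1) = ((fun i => ⌈x i⌉ - 1) - c) := by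
        funext i
        simp only [Pi.sub_apply, Int.ceil_sub_intCast]
        ring
      rw [this]
    refine ⟨(fun (c : Fin d → ℤ) (i : Fin d) => (c i : ℝ)) '' C₀, ?_, ?_⟩
    · rintro _ ⟨c, hc, rfl⟩ _ ⟨c', hc', rfl⟩ hne
      rw [Set.disjoint_left]
      intro x hx hx'
      have h1 := (key c x).1 hx
      have h2 := (key c' x).1 hx'
      have := (hC (fun i => ⌈x i⌉ - 1) trivial).unique
        (y₁ := (_, c)) (y₂ := (_, c')) ⟨h1, hc, sub_add_cancel _ _⟩ ⟨h2, hc', sub_add_cancel _ _⟩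
      apply hne
      have hcc : c = c' := (Prod.ext_iff.1 this).2
      rw [hcc]
    · rw [Set.eq_univ_iff_forall]
      intro x
      obtain ⟨⟨f, c⟩, ⟨hf, hc, h⟩, -⟩ := hC (fun i => ⌈x i⌉ - 1) trivial
      simp only [Set.mem_iUnion, exists_prop]
      refine ⟨_, ⟨c, hc, rfl⟩, (key c x).2 ?_⟩
      rw [← h]
      simpa using hf
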